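/- arXiv:1812.09154 — 2 statements merged into one kernel-verified Lean document; each statement's English description precedes it below -/
import Mathlib

section
/- Let p ∈ [2,∞) and t > 0, let Υ : ℝ → ℝ be given by Υ(s) = s + t·s·|s|^{p−2}, and let Ψ : ℝ → ℝ be the inverse function of Υ. Then Ψ is strictly increasing, Ψ(0) = 0, Ψ is Lipschitz with constant 1 (indeed Ψ is differentiable with 0 < Ψ'(r) ≤ 1 for all r, and Ψ'(0) = 1 when p > 2), and moreover Ψ(r)^{p−1} ≥ r/(1+t) for every r ≥ 1 + t. -/
/-!
The map `Υ` has derivative `1 + t (p - 1) |s|^(p-2) ≥ 1` at every point, the origin included, where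
`s |s|^(p-2)` has difference quotient `|s|^(p-2)`. Hence `Υ` is strictly increasing, so `Ψ` is
strictly increasing; being also surjective, `Ψ` is continuous, and the inverse function rule gives
`Ψ' = 1 / Υ'(Ψ) ∈ (0, 1]`. The Lipschitz bound and the value `Ψ'(0) = 1` for `p > 2` follow from
this formula. For the growth bound, `s = Ψ r ≥ 1` when `r ≥ 1 + t = Υ 1`, so `s ≤ s^(p-1)` and
`r = s + t s^(p-1) ≤ (1 + t) s^(p-1)`.
-/

noncomputable section

/-- `Υ(s) = s + t·s·|s|^{p−2}`, with `|s|^{p−2}` the real power (so `|s|⁰ = 1`). -/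
def Upsilon (p t : ℝ) : ℝ → ℝ := fun s => s + t * s * |s| ^ (p - 2)

/-- For `p = 2` and `s = 0` the convention `0 ^ 0 = 1` makes the formula give the correct
value `1`. -/
lemma hasDerivAt_mul_abs_rpow (p : ℝ) (hp : 2 ≤ p) (s : ℝ) :
    HasDerivAt (fun s : ℝ => s * |s| ^ (p - 2)) ((p - 1) * |s| ^ (p - 2)) s := by
  rcases eq_or_ne s 0 with rfl | hs
  · have hval : (p - 1) * |(0 : ℝ)| ^ (p - 2) = |(0 : ℝ)| ^ (p - 2) := by
      rcases hp.eq_or_lt with rfl | h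
      · norm_num
      · rw [abs_zero, Real.zero_rpow (by linarith), mul_zero]
    rw [hval, hasDerivAt_iff_tendsto_slope]
    have hc : Continuous (fun s : ℝ => |s| ^ (p - 2)) :=
      continuous_abs.rpow_const (fun _ => Or.inr (by linarith))
    refine ((hc.tendsto 0).mono_left nhdsWithin_le_nhds).congr' ?_
    filter_upwards [self_mem_nhdsWithin] with x hx
    have hx : x ≠ 0 := hx
    simp [slope_def_field, hx]
  · have habs : 0 < |s| := abs_pos.mpr hs
    have h := (hasDerivAt_id s).mul
      ((hasDerivAt_abs hs).rpow_const (p := p - 2) (Or.inl habs.ne'))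
    have h1 : |s| ^ (p - 2) = |s| ^ (p - 2 - 1) * |s| := by
      rw [Real.rpow_sub_one habs.ne', div_mul_cancel₀ _ habs.ne']
    have h2 : s * (SignType.sign s : ℝ) = |s| := self_mul_sign s
    have hval : 1 * |s| ^ (p - 2)
        + id s * ((SignType.sign s : ℝ) * (p - 2) * |s| ^ (p - 2 - 1))
        = (p - 1) * |s| ^ (p - 2) := by
      rw [h1, id]
      linear_combination ((p - 2) * |s| ^ (p - 2 - 1)) * h2
    exact hval ▸ h

lemma hasDerivAt_Upsilon (p t : ℝ) (hp : 2 ≤ p) (s : ℝ) :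
    HasDerivAt (Upsilon p t) (1 + t * ((p - 1) * |s| ^ (p - 2))) s := by
  have h := (hasDerivAt_id s).add ((hasDerivAt_mul_abs_rpow p hp s).const_mul t)
  refine h.congr_of_eventuallyEq (Filter.Eventually.of_forall fun x => ?_)
  simp [Upsilon, mul_assoc]

/-- For `p ∈ [2,∞)`, `t > 0`, the inverse `Ψ` of `Υ` is strictly increasing, `Ψ(0) = 0`,
`Ψ` is 1-Lipschitz (indeed differentiable with `0 < Ψ' ≤ 1`, and `Ψ'(0) = 1` when `p > 2`),
and `Ψ(r)^{p−1} ≥ r/(1+t)` for every `r ≥ 1 + t`. -/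
theorem stmt14 (p t : ℝ) (hp : 2 ≤ p) (ht : 0 < t) (Ψ : ℝ → ℝ)
    (hleft : Function.LeftInverse Ψ (Upsilon p t))
    (hright : Function.RightInverse Ψ (Upsilon p t)) :
    StrictMono Ψ ∧ Ψ 0 = 0 ∧ LipschitzWith 1 Ψ ∧
    (∀ r : ℝ, ∃ D : ℝ, HasDerivAt Ψ D r ∧ 0 < D ∧ D ≤ 1) ∧
    (2 < p → HasDerivAt Ψ 1 0) ∧
    ∀ r : ℝ, 1 + t ≤ r → r / (1 + t) ≤ Ψ r ^ (p - 1) := by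
  have hD1 : ∀ s : ℝ, 1 ≤ 1 + t * ((p - 1) * |s| ^ (p - 2)) := fun s => by
    have h1 : 0 ≤ p - 1 := by linarith
    have h2 : 0 ≤ t * ((p - 1) * |s| ^ (p - 2)) := by positivity
    linarith
  have hmonoU : StrictMono (Upsilon p t) := strictMono_of_deriv_pos fun s => by
    rw [(hasDerivAt_Upsilon p t hp s).deriv]
    linarith [hD1 s]
  have hmono : StrictMono Ψ := fun a b hab => by
    rw [← hmonoU.lt_iff_lt, hright a, hright b]
    exact hab
  have hcont : Continuous Ψ := hmono.monotone.continuous_of_surjective hleft.surjective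
  have h0 : Ψ 0 = 0 := by
    have h := hleft 0
    simpa [Upsilon] using h
  have hder : ∀ r : ℝ, HasDerivAt Ψ (1 + t * ((p - 1) * |Ψ r| ^ (p - 2)))⁻¹ r := fun r =>
    (hasDerivAt_Upsilon p t hp (Ψ r)).of_local_left_inverse hcont.continuousAt
      (by linarith [hD1 (Ψ r)]) (Filter.Eventually.of_forall hright)
  have hpos : ∀ r : ℝ, 0 < (1 + t * ((p - 1) * |Ψ r| ^ (p - 2)))⁻¹ := fun r =>
    inv_pos.mpr (by linarith [hD1 (Ψ r)])
  have hle : ∀ r : ℝ, (1 + t * ((p - 1) * |Ψ r| ^ (p - 2)))⁻¹ ≤ 1 := fun r =>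
    inv_le_one_of_one_le₀ (hD1 (Ψ r))
  refine ⟨hmono, h0, ?_, fun r => ⟨_, hder r, hpos r, hle r⟩, fun h2 => ?_, fun r hr => ?_⟩
  · refine lipschitzWith_of_nnnorm_deriv_le (fun r => (hder r).differentiableAt) fun r => ?_
    rw [← NNReal.coe_le_coe, coe_nnnorm, (hder r).deriv, Real.norm_of_nonneg (hpos r).le]
    exact hle r
  · have h := hder 0
    rw [h0, abs_zero, Real.zero_rpow (by linarith)] at h
    simpa using h
  · have hU1 : Upsilon p t 1 = 1 + t := by simp [Upsilon]
    have hs : 1 ≤ Ψ r := by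
      rw [← hmonoU.le_iff_le, hU1, hright r]
      exact hr
    have hs0 : 0 < Ψ r := by linarith
    have heq : Ψ r + t * Ψ r * |Ψ r| ^ (p - 2) = r := hright r
    have hpow : Ψ r * |Ψ r| ^ (p - 2) = Ψ r ^ (p - 1) := by
      rw [abs_of_pos hs0, show p - 1 = 1 + (p - 2) by ring, Real.rpow_add hs0, Real.rpow_one]
    have hge : Ψ r ≤ Ψ r ^ (p - 1) := Real.self_le_rpow_of_one_le hs (by linarith)
    rw [div_le_iff₀ (by linarith)]
    rw [mul_assoc, hpow] at heq
    linarith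
end
end

section
/- Let θ ∈ (0,1), C > 0 and t > 0. Suppose f : ℝ → ℝ is differentiable on the interval [t/2, t], f(s) > 0 for all s ∈ [t/2, t], and f(s)^{1/θ} ≤ −C·f'(s) for all s ∈ [t/2, t]. Then t/2 ≤ (C·θ/(1 − θ))·f(t)^{1 − 1/θ}. -/
/-!
The function `g = f ^ (1 - 1/θ)` linearizes the differential inequality: since `1 - 1/θ < 0`, it
becomes `g' ≥ (1 - θ) / (C θ)`. The mean value theorem on `[t/2, t]`, together with `g (t/2) ≥ 0`,
then bounds `g t` from below.
-/

/-- If `f > 0` is differentiable on `[t/2, t]` and satisfies the differential inequality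
`f(s)^{1/θ} ≤ −C·f'(s)` there, then `t/2 ≤ (Cθ/(1−θ))·f(t)^{1−1/θ}`. -/
theorem stmt17 (θ C t : ℝ) (hθ : θ ∈ Set.Ioo (0 : ℝ) 1) (hC : 0 < C) (ht : 0 < t)
    (f f' : ℝ → ℝ)
    (hderiv : ∀ s ∈ Set.Icc (t / 2) t, HasDerivAt f (f' s) s)
    (hpos : ∀ s ∈ Set.Icc (t / 2) t, 0 < f s)
    (hineq : ∀ s ∈ Set.Icc (t / 2) t, f s ^ (1 / θ) ≤ -C * f' s) :
    t / 2 ≤ C * θ / (1 - θ) * f t ^ (1 - 1 / θ) := by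
  obtain ⟨h0, h1⟩ := hθ
  have h1' : 0 < 1 - θ := by linarith
  have hlt : t / 2 < t := by linarith
  have hg : ∀ s ∈ Set.Icc (t / 2) t, HasDerivAt (fun x => f x ^ (1 - 1 / θ))
      (f' s * (1 - 1 / θ) * f s ^ (1 - 1 / θ - 1)) s := fun s hs =>
    (hderiv s hs).rpow_const (Or.inl (hpos s hs).ne')
  obtain ⟨c, hc, hslope⟩ := exists_hasDerivAt_eq_slope (fun x => f x ^ (1 - 1 / θ)) _ hlt
    (fun s hs => (hg s hs).continuousAt.continuousWithinAt)
    (fun s hs => hg s (Set.Ioo_subset_Icc_self hs))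
  have hcI := Set.Ioo_subset_Icc_self hc
  -- The powers of `f c` cancel, so the derivative of `f ^ (1 - 1/θ)` is bounded below by a constant.
  have hbound : 1 ≤ C * θ / (1 - θ) * (f' c * (1 - 1 / θ) * f c ^ (1 - 1 / θ - 1)) := by
    have hexp : f c ^ (1 - 1 / θ - 1) = (f c ^ (1 / θ))⁻¹ := by
      rw [← Real.rpow_neg (hpos c hcI).le]
      congr 1
      ring
    have hP : 0 < f c ^ (1 / θ) := Real.rpow_pos_of_pos (hpos c hcI) _
    have heq : C * θ / (1 - θ) * (f' c * (1 - 1 / θ) * (f c ^ (1 / θ))⁻¹)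
        = (-C * f' c) / f c ^ (1 / θ) := by
      generalize f c ^ (1 / θ) = P at hP
      field_simp
      ring
    rw [hexp, heq, one_le_div hP]
    exact hineq c hcI
  rw [hslope, ← mul_div_assoc, one_le_div (by linarith)] at hbound
  have hleft : 0 ≤ C * θ / (1 - θ) * f (t / 2) ^ (1 - 1 / θ) :=
    mul_nonneg (by positivity) (Real.rpow_nonneg (hpos _ ⟨le_rfl, hlt.le⟩).le _)
  rw [mul_sub] at hbound
  linarith
end
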